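/- Let F be a field of characteristic zero and let P ∈ F[X_1,...,X_N] be a nonzero polynomial of degree at most Δ that contains at least one monomial of support at most ℓ. Fix a monomial order and let α be the trailing (minimal) monomial of P. If P = Σ_{i=1}^{T} F_i(Q_{i1},...,Q_{it}) where each Q_{ij} has degree at most d, then the support of α is at most 2e³d(ln T + t·ln(2t) + 1), where e is Euler's constant. -/

import Mathlib

open MvPolynomial

/-- Exponent vectors supported in `s` with total degree at most `L`. -/
noncomputable def expBox {σ : Type*} [DecidableEq σ] (s : Finset σ) (L : ℕ) : Finset (σ →₀ ℕ) :=
  (Finset.range (L + 1)).biUnion (fun j => Finset.finsuppAntidiag s j)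

lemma mem_expBox {σ : Type*} [DecidableEq σ] {s : Finset σ} {L : ℕ} {c : σ →₀ ℕ} :
    c ∈ expBox s L ↔ c.support ⊆ s ∧ c.degree ≤ L := by
  simp only [expBox, Finset.mem_biUnion, Finset.mem_range, Finset.mem_finsuppAntidiag]
  constructor
  · rintro ⟨j, hj, h1, h2⟩
    refine ⟨h2, ?_⟩
    have : c.degree = s.sum c := Finsupp.sum_of_support_subset c h2 (fun _ x => x) (by simp)
    omega
  · rintro ⟨h1, h2⟩
    have : c.degree = s.sum c := Finsupp.sum_of_support_subset c h1 (fun _ x => x) (by simp)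
    exact ⟨c.degree, by omega, this.symm, h1⟩

lemma card_expBox {σ : Type*} [DecidableEq σ] (s : Finset σ) (L : ℕ) :
    (expBox s L).card = (s.card + L).choose L := by
  have h1 : (expBox s L).card = ∑ j ∈ Finset.range (L + 1), Nat.multichoose s.card j := by
    rw [expBox, Finset.card_biUnion]
    · refine Finset.sum_congr rfl fun j _ => ?_
      rw [Finset.card_finsuppAntidiag_nat_eq_multichoose]
    · intro i _ j _ hij
      rw [Function.onFun, Finset.disjoint_left]
      intro c hc hc'
      rw [Finset.mem_finsuppAntidiag] at hc hc'
      exact hij (hc.1.symm.trans hc'.1)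
  have h2 : ∀ n L : ℕ, ∑ j ∈ Finset.range (L + 1), Nat.multichoose n j
      = Nat.multichoose (n + 1) L := by
    intro n L
    induction L with
    | zero => simp
    | succ L ih => rw [Finset.sum_range_succ, ih, Nat.multichoose_succ_succ, add_comm]
  rw [h1, h2, Nat.multichoose_eq]
  congr 1
  omega

lemma tdeg_le_iff {σ R : Type*} [CommSemiring R] (p : MvPolynomial σ R) (e : ℕ) :
    p.totalDegree ≤ e ↔ ∀ m, coeff m p ≠ 0 → m.degree ≤ e := by
  rw [MvPolynomial.totalDegree, Finset.sup_le_iff]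
  simp only [mem_support_iff]
  rfl

lemma tdeg_pderiv {σ R : Type*} [CommSemiring R] (p : MvPolynomial σ R) (i : σ) (e : ℕ)
    (h : p.totalDegree ≤ e + 1) : (pderiv i p).totalDegree ≤ e := by
  rw [tdeg_le_iff] at *
  intro m hm
  rw [coeff_pderiv] at hm
  have := h _ (left_ne_zero_of_mul hm)
  rw [map_add, Finsupp.degree_single] at this
  omega

lemma tdeg_killCompl {σ τ R : Type*} [CommSemiring R] {f : σ → τ} (hf : f.Injective)
    (p : MvPolynomial τ R) (e : ℕ)
    (h : p.totalDegree ≤ e) : (killCompl hf p).totalDegree ≤ e := by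
  rw [tdeg_le_iff] at *
  intro m hm
  rw [coeff_killCompl] at hm
  have := h _ hm
  rwa [Finsupp.degree_mapDomain] at this

lemma pderiv_chain {σ τ R : Type*} [CommSemiring R] [Fintype τ] (Q : τ → MvPolynomial σ R)
    (G : MvPolynomial τ R) (i : σ) :
    pderiv i (aeval Q G) = ∑ j, aeval Q (pderiv j G) * pderiv i (Q j) := by
  classical
  induction G using MvPolynomial.induction_on with
  | C a => simp
  | add p q hp hq => simp only [map_add, hp, hq, add_mul, Finset.sum_add_distrib]
  | mul_X p a h =>
    simp only [map_mul, aeval_X, pderiv_mul, h, map_add, add_mul, Finset.sum_add_distrib,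
      Finset.sum_mul, pderiv_X, Pi.single_apply]
    congr 1
    · refine Finset.sum_congr rfl fun j _ => by ring
    · simp [apply_ite]

/-- A derivative in direction `o` where `none` means no derivative. -/
noncomputable def optD {τ R : Type*} [CommSemiring R] (o : Option τ) (G : MvPolynomial τ R) :
    MvPolynomial τ R := o.elim G (fun j => pderiv j G)

instance optD_comm {τ R : Type*} [CommSemiring R] :
    LeftCommutative (optD : Option τ → MvPolynomial τ R → MvPolynomial τ R) where
  left_comm a b G := by
    cases a <;> cases b <;> simp only [optD, Option.elim]
    rename_i i j
    ext m
    simp only [coeff_pderiv]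
    by_cases hij : i = j
    · rw [hij]
    · have hji : j ≠ i := fun h => hij h.symm
      simp only [Finsupp.add_apply, Finsupp.single_eq_of_ne hij, Finsupp.single_eq_of_ne hji]
      rw [add_right_comm]
      push_cast
      ring

/-- Spanning submodule for shifted derivatives of a composition. -/
noncomputable def shiftW {σ τ R : Type*} [CommSemiring R] (Q : τ → MvPolynomial σ R) (G : MvPolynomial τ R)
    (m e : ℕ) : Submodule R (MvPolynomial σ R) :=
  Submodule.span R {p | ∃ s : Multiset (Option τ), s.card = m ∧ ∃ A : MvPolynomial σ R,
    A.totalDegree ≤ e ∧ p = aeval Q (s.foldr optD G) * A}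

lemma shiftW_pderiv {σ τ R : Type*} [CommSemiring R] [Fintype τ] (Q : τ → MvPolynomial σ R)
    (G : MvPolynomial τ R) (m e d : ℕ) (hQ : ∀ j, (Q j).totalDegree ≤ d + 1) (i : σ)
    (p : MvPolynomial σ R) (hp : p ∈ shiftW Q G m e) :
    pderiv i p ∈ shiftW Q G (m + 1) (e + d) := by
  induction hp using Submodule.span_induction with
  | mem x hx =>
    obtain ⟨s, hs, A, hA, rfl⟩ := hx
    rw [pderiv_mul, pderiv_chain, Finset.sum_mul]
    refine Submodule.add_mem _ (Submodule.sum_mem _ fun j _ => ?_) ?_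
    · refine Submodule.subset_span ⟨some j ::ₘ s, by simp [hs], pderiv i (Q j) * A, ?_, ?_⟩
      · refine (totalDegree_mul _ _).trans ?_
        have := tdeg_pderiv (Q j) i d (hQ j)
        omega
      · rw [Multiset.foldr_cons, mul_assoc]
        rfl
    · refine Submodule.subset_span ⟨none ::ₘ s, by simp [hs], pderiv i A, ?_, ?_⟩
      · exact tdeg_pderiv A i _ (by omega)
      · rw [Multiset.foldr_cons]
        rfl
  | zero => simp
  | add x y _ _ hx hy => rw [map_add]; exact Submodule.add_mem _ hx hy
  | smul a x _ hx => rw [Derivation.map_smul]; exact Submodule.smul_mem _ _ hx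

lemma shiftW_mul {σ τ R : Type*} [CommSemiring R] (Q : τ → MvPolynomial σ R)
    (G : MvPolynomial τ R) (m e L : ℕ) (B : MvPolynomial σ R) (hB : B.totalDegree ≤ L)
    (p : MvPolynomial σ R) (hp : p ∈ shiftW Q G m e) :
    B * p ∈ shiftW Q G m (L + e) := by
  induction hp using Submodule.span_induction with
  | mem x hx =>
    obtain ⟨s, hs, A, hA, rfl⟩ := hx
    refine Submodule.subset_span ⟨s, hs, B * A, ?_, by ring⟩
    refine (totalDegree_mul _ _).trans ?_
    omega
  | zero => simp
  | add x y _ _ hx hy => rw [mul_add]; exact Submodule.add_mem _ hx hy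
  | smul a x _ hx => rw [mul_smul_comm]; exact Submodule.smul_mem _ _ hx

/-- Iterated derivative along a list, as a linear map. -/
noncomputable def listD {σ R : Type*} [CommSemiring R] (l : List σ) :
    MvPolynomial σ R →ₗ[R] MvPolynomial σ R :=
  l.foldr (fun i f => (pderiv i).toLinearMap ∘ₗ f) LinearMap.id

lemma listD_cons {σ R : Type*} [CommSemiring R] (i : σ) (l : List σ) (p : MvPolynomial σ R) :
    listD (i :: l) p = pderiv i (listD l p) := rfl

lemma shiftW_listD {σ τ R : Type*} [CommSemiring R] [Fintype τ] (Q : τ → MvPolynomial σ R)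
    (G : MvPolynomial τ R) (d : ℕ) (hQ : ∀ j, (Q j).totalDegree ≤ d + 1) (l : List σ) :
    listD l (aeval Q G) ∈ shiftW Q G l.length (l.length * d) := by
  induction l with
  | nil =>
    refine Submodule.subset_span ⟨0, by simp, 1, by simp, ?_⟩
    simp [listD]
  | cons i l ih =>
    rw [listD_cons, List.length_cons, add_mul, one_mul]
    exact shiftW_pderiv Q G _ _ d hQ i _ ih

lemma listD_coeff {σ R : Type*} [CommSemiring R] [DecidableEq σ] (l : List σ)
    (p : MvPolynomial σ R) (c : σ →₀ ℕ) :
    ∃ K : ℕ, K ≠ 0 ∧ coeff c (listD l p) = coeff (c + Multiset.toFinsupp (l : Multiset σ)) p * K := by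
  induction l generalizing c with
  | nil => exact ⟨1, by simp, by simp [listD]⟩
  | cons i l ih =>
    obtain ⟨K, hK, h⟩ := ih (c + Finsupp.single i 1)
    refine ⟨K * (c i + 1), by positivity, ?_⟩
    rw [listD_cons, coeff_pderiv, h, ← Multiset.cons_coe, ← Multiset.singleton_add, map_add,
      Multiset.toFinsupp_singleton, add_assoc]
    push_cast
    ring

lemma shiftW_le {σ τ R : Type*} [CommSemiring R] [Fintype σ] [DecidableEq σ]
    (Q : τ → MvPolynomial σ R) (G : MvPolynomial τ R) (m e : ℕ) :
    shiftW Q G m e ≤ Submodule.span R (Set.range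
      (fun x : Sym (Option τ) m × (expBox (Finset.univ : Finset σ) e) =>
        aeval Q (x.1.1.foldr optD G) * monomial x.2.1 (1 : R))) := by
  rw [shiftW, Submodule.span_le]
  rintro p ⟨s, hs, A, hA, rfl⟩
  rw [SetLike.mem_coe, A.as_sum, Finset.mul_sum]
  refine Submodule.sum_mem _ fun c hc => ?_
  have hm : monomial c (coeff c A) = (coeff c A) • monomial c (1 : R) := by
    rw [smul_monomial, smul_eq_mul, mul_one]
  rw [hm, mul_smul_comm]
  refine Submodule.smul_mem _ _ (Submodule.subset_span ⟨(⟨s, hs⟩, ⟨c, ?_⟩), rfl⟩)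
  rw [mem_expBox]
  exact ⟨Finset.subset_univ _, (tdeg_le_iff _ _).1 hA c (mem_support_iff.1 hc)⟩

lemma linInd_trailing {σ R ι : Type*} [Field R] [Fintype ι]
    (le : (σ →₀ ℕ) → (σ →₀ ℕ) → Prop) (hlin : IsLinearOrder _ le)
    (v : ι → MvPolynomial σ R) (m : ι → σ →₀ ℕ) (hm : m.Injective)
    (h1 : ∀ i, coeff (m i) (v i) ≠ 0) (h2 : ∀ i c, coeff c (v i) ≠ 0 → le (m i) c) :
    LinearIndependent R v := by
  classical
  have hmin : ∀ s : Finset ι, s.Nonempty → ∃ i ∈ s, ∀ j ∈ s, le (m i) (m j) := by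
    intro s hs
    induction hs using Finset.Nonempty.cons_induction with
    | singleton a => exact ⟨a, by simp, by simpa using hlin.refl _⟩
    | cons a s ha hs ih =>
      obtain ⟨i, hi, h⟩ := ih
      rcases hlin.total (m a) (m i) with h' | h'
      · refine ⟨a, by simp, fun j hj => ?_⟩
        rcases Finset.mem_cons.1 hj with rfl | hj
        · exact hlin.refl _
        · exact hlin.trans _ _ _ h' (h j hj)
      · refine ⟨i, by simp [hi], fun j hj => ?_⟩
        rcases Finset.mem_cons.1 hj with rfl | hj
        · exact h'
        · exact h j hj
  rw [Fintype.linearIndependent_iff]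
  intro g hg
  by_contra hne
  push Not at hne
  obtain ⟨i0, hi0⟩ := hne
  obtain ⟨i, hi, hij⟩ := hmin (Finset.univ.filter fun i => g i ≠ 0) ⟨i0, by simp [hi0]⟩
  have hgi : g i ≠ 0 := by simpa using hi
  have hc := congrArg (coeff (m i)) hg
  rw [coeff_sum, Finset.sum_eq_single i] at hc
  · simp only [coeff_smul, smul_eq_mul, coeff_zero, mul_eq_zero] at hc
    exact hc.elim hgi (h1 i)
  · intro j _ hji
    by_contra hne
    simp only [coeff_smul, smul_eq_mul, mul_eq_zero, not_or] at hne
    have := h2 j _ hne.2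
    exact hji (hm (hlin.antisymm _ _ this (hij j (by simpa using hne.1))))
  · simp

lemma main_count {F σ τ ι : Type*} [Field F] [CharZero F] [Fintype σ] [Fintype τ] [Fintype ι]
    [DecidableEq σ] [DecidableEq τ]
    (P : MvPolynomial σ F)
    (le : (σ →₀ ℕ) → (σ →₀ ℕ) → Prop) (hlin : IsLinearOrder _ le)
    (hadd : ∀ μ ν η : σ →₀ ℕ, le μ ν → le (μ + η) (ν + η))
    (d : ℕ)
    (Fi : ι → MvPolynomial τ F) (Q : ι → τ → MvPolynomial σ F)
    (hQ : ∀ i j, (Q i j).totalDegree ≤ d + 1)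
    (hsum : P = ∑ i, aeval (Q i) (Fi i))
    (α : σ →₀ ℕ) (hα : coeff α P ≠ 0) (htrail : ∀ β, coeff β P ≠ 0 → le α β)
    (hpos : ∀ i, α i ≠ 0) (k L : ℕ) :
    (Fintype.card σ).choose k * (Fintype.card σ - k + L).choose L ≤
      Fintype.card ι * ((Fintype.card τ + k).choose k *
        (Fintype.card σ + (L + k * d)).choose (L + k * d)) := by
  -- spanning family
  let u : ι × (Sym (Option τ) k × (expBox (Finset.univ : Finset σ) (L + k * d))) →
      MvPolynomial σ F := fun x =>
    aeval (Q x.1) (x.2.1.1.foldr optD (Fi x.1)) * monomial x.2.2.1 (1 : F)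
  let J := (a : (Finset.powersetCard k (Finset.univ : Finset σ))) × (expBox (a.1ᶜ) L)
  let one : Finset σ → σ →₀ ℕ := fun a => Multiset.toFinsupp ((a.toList : List σ) : Multiset σ)
  have one_apply : ∀ a i, one a i = if i ∈ a then 1 else 0 := by
    intro a i
    simp only [one, Finset.coe_toList, Multiset.toFinsupp_apply]
    rw [Multiset.count_eq_of_nodup a.nodup]
    rfl
  have one_le : ∀ a, one a ≤ α := by
    intro a i
    rw [one_apply]
    have := hpos i
    split_ifs <;> omega
  let v : J → MvPolynomial σ F := fun x => monomial x.2.1 (1 : F) * listD x.1.1.toList P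
  let m : J → σ →₀ ℕ := fun x => x.2.1 + (α - one x.1.1)
  have hmi : m.Injective := by
    rintro ⟨⟨a, ha⟩, ⟨b, hb⟩⟩ ⟨⟨a', ha'⟩, ⟨b', hb'⟩⟩ h
    simp only [m] at h
    rw [mem_expBox] at hb hb'
    have hz : ∀ {a : Finset σ} {b : σ →₀ ℕ}, b.support ⊆ aᶜ → ∀ i ∈ a, b i = 0 := by
      intro a b hb i hi
      by_contra hne
      exact Finset.mem_compl.1 (hb (Finsupp.mem_support_iff.2 hne)) hi
    have key : ∀ i, b i + (α i - if i ∈ a then 1 else 0)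
        = b' i + (α i - if i ∈ a' then 1 else 0) := by
      intro i
      have := DFunLike.congr_fun h i
      simpa only [Finsupp.add_apply, Finsupp.tsub_apply, one_apply] using this
    have haa : a = a' := by
      ext i
      have h1 := key i
      have h2 := hpos i
      have h3 := hz hb.1 i
      have h4 := hz hb'.1 i
      by_cases hi : i ∈ a <;> by_cases hi' : i ∈ a' <;>
        simp only [hi, hi', if_true, if_false, forall_true_left, true_iff, false_iff,
          not_true] at h1 h3 h4 ⊢ <;> omega
    subst haa
    have hbb : b = b' := by
      ext i
      have := key i
      omega
    subst hbb
    rfl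
  have hvli : LinearIndependent F v := by
    refine linInd_trailing le hlin v m hmi ?_ ?_
    · intro x
      simp only [v, m]
      rw [coeff_monomial_mul]
      obtain ⟨K, hK, h⟩ := listD_coeff x.1.1.toList P (α - one x.1.1)
      rw [h]
      have : α - one x.1.1 + one x.1.1 = α := tsub_add_cancel_of_le (one_le _)
      simp only [one] at this
      rw [one_mul]
      refine mul_ne_zero ?_ (by exact_mod_cast hK)
      convert hα using 2
    · intro x c hc
      simp only [v] at hc
      rw [coeff_monomial_mul'] at hc
      split_ifs at hc with hle
      swap
      · exact absurd rfl hc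
      obtain ⟨K, hK, h⟩ := listD_coeff x.1.1.toList P (c - x.2.1)
      rw [h, one_mul] at hc
      have h1 := htrail _ (left_ne_zero_of_mul hc)
      change le α (c - x.2.1 + one x.1.1) at h1
      simp only [m]
      have hcc : c = x.2.1 + (c - x.2.1) := (add_tsub_cancel_of_le hle).symm
      have h2 : le (α - one x.1.1) (c - x.2.1) := by
        rcases hlin.total (α - one x.1.1) (c - x.2.1) with h' | h'
        · exact h'
        · have h3 := hadd _ _ (one x.1.1) h'
          rw [tsub_add_cancel_of_le (one_le _)] at h3
          have h4 := hlin.antisymm _ _ h1 h3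
          rw [h4, add_tsub_cancel_right]
          exact hlin.refl _
      have h3 := hadd _ _ x.2.1 h2
      rw [hcc, add_comm x.2.1, add_comm x.2.1 (c - x.2.1)]
      exact h3
  have hspan : Set.range v ≤ (Submodule.span F (Set.range u) : Set (MvPolynomial σ F)) := by
    rintro _ ⟨x, rfl⟩
    simp only [v]
    rw [hsum, map_sum, Finset.mul_sum]
    refine Submodule.sum_mem _ fun i _ => ?_
    have h1 := shiftW_listD (Q i) (Fi i) d (hQ i) x.1.1.toList
    have hlen : x.1.1.toList.length = k := by
      rw [Finset.length_toList]
      exact (Finset.mem_powersetCard.1 x.1.2).2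
    rw [hlen] at h1
    have h2 := shiftW_mul (Q i) (Fi i) _ _ L (monomial x.2.1 (1 : F)) (by
      rw [totalDegree_monomial _ one_ne_zero]
      exact (mem_expBox.1 x.2.2).2) _ h1
    refine Submodule.span_mono ?_ (shiftW_le _ _ _ _ h2)
    rintro _ ⟨y, rfl⟩
    exact ⟨(i, y), rfl⟩
  letI : Fintype (Set.range u) := Fintype.ofFinite _
  have hcard := linearIndependent_le_span' v hvli (Set.range u) hspan
  rw [Cardinal.mk_fintype, Nat.cast_le] at hcard
  have h1 : Fintype.card (Set.range u) ≤ Fintype.card ι * ((Fintype.card τ + k).choose k *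
        (Fintype.card σ + (L + k * d)).choose (L + k * d)) := by
    refine (Fintype.card_range_le u).trans (le_of_eq ?_)
    rw [Fintype.card_prod, Fintype.card_prod, Fintype.card_coe, card_expBox,
      Sym.card_sym_eq_choose, Fintype.card_option, Finset.card_univ]
    congr 3
    omega
  have h2 : Fintype.card J = (Fintype.card σ).choose k * (Fintype.card σ - k + L).choose L := by
    simp only [J]
    rw [Fintype.card_sigma]
    rw [Finset.sum_congr rfl (g := fun _ => (Fintype.card σ - k + L).choose L)]
    · rw [Finset.sum_const, Finset.card_univ, Fintype.card_coe, Finset.card_powersetCard,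
        Finset.card_univ, smul_eq_mul]
    · intro a _
      rw [Fintype.card_coe, card_expBox, Finset.card_compl, (Finset.mem_powersetCard.1 a.2).2]
  rw [← h2]
  exact hcard.trans h1

lemma choose_growth (n d' j : ℕ) (hd : 0 < d') :
    ((n * d' + n + j).choose n : ℝ) ≤ (n * d' + n).choose n * Real.exp ((j : ℝ) / d') := by
  induction j with
  | zero => simp
  | succ j ih =>
    set m := n * d' + n + j with hm
    have h1 := Nat.choose_mul_succ_eq m n
    have h2 : m + 1 - n = n * d' + j + 1 := by omega
    rw [h2] at h1
    have h3 : (m.choose n : ℝ) * (m + 1) = ((m + 1).choose n : ℝ) * (n * d' + j + 1) := by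
      exact_mod_cast h1
    have hd' : (0 : ℝ) < d' := by exact_mod_cast hd
    have hq : (0 : ℝ) < n * d' + j + 1 := by positivity
    have h4 : (m : ℝ) + 1 ≤ (n * d' + j + 1) * Real.exp (1 / d') := by
      have h5 := Real.add_one_le_exp (1 / (d' : ℝ))
      have h6 : (m : ℝ) = n * d' + n + j := by rw [hm]; push_cast; ring
      calc (m : ℝ) + 1 ≤ (n * d' + j + 1) * (1 / d' + 1) := by
            rw [h6]
            have : (n * d' + j + 1 : ℝ) * (1 / d' + 1) = n + (j + 1) / d' + (n * d' + j + 1) := by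
              field_simp
              ring
            rw [this]
            have : (0 : ℝ) ≤ (j + 1) / d' := by positivity
            linarith
        _ ≤ _ := by gcongr
    have h7 : ((m + 1).choose n : ℝ) ≤ m.choose n * Real.exp (1 / d') := by
      refine le_of_mul_le_mul_right ?_ hq
      rw [← h3]
      calc (m.choose n : ℝ) * (m + 1) ≤ m.choose n * ((n * d' + j + 1) * Real.exp (1 / d')) := by
            gcongr
        _ = _ := by ring
    have h8 : ((j + 1 : ℕ) : ℝ) / d' = j / d' + 1 / d' := by push_cast; ring
    rw [h8, Real.exp_add, ← mul_assoc]
    refine h7.trans ?_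
    gcongr

lemma choose_growth' (n d' k : ℕ) :
    ((n * d' + n + k * d').choose n : ℝ) ≤ (n * d' + n).choose n * Real.exp 1 ^ k := by
  rcases Nat.eq_zero_or_pos d' with rfl | hd
  · simp only [mul_zero, add_zero]
    have : (1 : ℝ) ≤ Real.exp 1 ^ k := one_le_pow₀ (Real.one_le_exp (by norm_num))
    have h0 : (0 : ℝ) ≤ ((0 + n).choose n : ℝ) := by positivity
    nlinarith
  · refine (choose_growth n d' (k * d') hd).trans (le_of_eq ?_)
    have hd' : (d' : ℝ) ≠ 0 := by exact_mod_cast hd.ne'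
    rw [← Real.exp_nat_mul]
    congr 2
    push_cast
    field_simp

set_option maxHeartbeats 2000000 in
lemma numeric (n d' k t T : ℕ) (hk : 1 ≤ k) (hkn : k ≤ n)
    (hn : 2 * Real.exp 1 ^ 3 * (d' + 1) * k < n)
    (hT : (T : ℝ) * 2 ^ t < Real.exp 1 ^ k) :
    ¬ (n.choose k * (n - k + n * d').choose (n * d') ≤
      T * ((t + k).choose k * (n + (n * d' + k * d')).choose (n * d' + k * d'))) := by
  intro h
  set M := n * d' + n with hM
  have e1 : (n - k + n * d').choose (n * d') = (M - k).choose (n - k) := by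
    have : M - k = n - k + n * d' := by omega
    rw [this, Nat.choose_symm_add]
  have e2 : (n + (n * d' + k * d')).choose (n * d' + k * d') = (M + k * d').choose n := by
    have : M + k * d' = n + (n * d' + k * d') := by omega
    rw [this, Nat.choose_symm_add]
  rw [e1, e2] at h
  have e3 : M.choose n * n.choose k = M.choose k * (M - k).choose (n - k) := Nat.choose_mul hkn
  have e4 := choose_growth' n d' k
  rw [← hM] at e4
  have e5 : (t + k).choose k ≤ 2 ^ (t + k) := Nat.choose_le_two_pow _ _
  have hMn : (0 : ℝ) < M.choose n := by
    exact_mod_cast Nat.choose_pos (by omega)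
  -- A^2 ≤ ...
  have h' : (n.choose k : ℝ) * (M - k).choose (n - k) ≤
      T * ((t + k).choose k * (M + k * d').choose n) := by exact_mod_cast h
  have e3' : (M.choose n : ℝ) * n.choose k = M.choose k * (M - k).choose (n - k) := by
    exact_mod_cast e3
  have e5' : ((t + k).choose k : ℝ) ≤ 2 ^ t * 2 ^ k := by
    rw [← pow_add]; exact_mod_cast e5
  set E := Real.exp 1 with hE
  have hEpos : 0 < E := Real.exp_pos 1
  have h1 : (n.choose k : ℝ) ^ 2 ≤ T * (2 ^ t * 2 ^ k) * E ^ k * M.choose k := by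
    refine le_of_mul_le_mul_right ?_ hMn
    calc (n.choose k : ℝ) ^ 2 * M.choose n = n.choose k * (M.choose n * n.choose k) := by ring
      _ = M.choose k * (n.choose k * (M - k).choose (n - k)) := by rw [e3']; ring
      _ ≤ M.choose k * (T * ((t + k).choose k * (M + k * d').choose n)) := by gcongr
      _ ≤ M.choose k * (T * ((2 ^ t * 2 ^ k) * (M.choose n * E ^ k))) := by gcongr
      _ = _ := by ring
  have hf : (0 : ℝ) < k.factorial := by exact_mod_cast k.factorial_pos
  have h2 : ((n : ℝ) - k) ^ k ≤ k.factorial * n.choose k := by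
    have := Nat.pow_sub_le_descFactorial n k
    rw [Nat.descFactorial_eq_factorial_mul_choose] at this
    have h3 : (n - k) ^ k ≤ k.factorial * n.choose k :=
      (Nat.pow_le_pow_left (by omega) k).trans this
    rw [← Nat.cast_sub hkn]
    exact_mod_cast h3
  have h3 : (k.factorial : ℝ) * M.choose k ≤ (M : ℝ) ^ k := by
    have := Nat.descFactorial_le_pow M k
    rw [Nat.descFactorial_eq_factorial_mul_choose] at this
    exact_mod_cast this
  have h4 : (k.factorial : ℝ) ≤ (k : ℝ) ^ k := by exact_mod_cast Nat.factorial_le_pow k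
  have hnk : (0 : ℝ) ≤ (n : ℝ) - k := by
    have : (k : ℝ) ≤ n := by exact_mod_cast hkn
    linarith
  have hMr : (M : ℝ) = n * (d' + 1) := by rw [hM]; push_cast; ring
  have hk' : (1 : ℝ) ≤ k := by exact_mod_cast hk
  have hnpos : (0 : ℝ) < n := by linarith
  have h5 : (((n : ℝ) - k) ^ 2) ^ k < (2 * E ^ 2 * (n * (d' + 1)) * k) ^ k := by
    calc (((n : ℝ) - k) ^ 2) ^ k = (((n : ℝ) - k) ^ k) ^ 2 := by rw [← pow_mul, ← pow_mul, mul_comm]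
      _ ≤ ((k.factorial : ℝ) * n.choose k) ^ 2 := by gcongr
      _ = (k.factorial : ℝ) ^ 2 * (n.choose k : ℝ) ^ 2 := by ring
      _ ≤ (k.factorial : ℝ) ^ 2 * (T * (2 ^ t * 2 ^ k) * E ^ k * M.choose k) := by gcongr
      _ = (T * 2 ^ t) * (2 ^ k * E ^ k * k.factorial * (k.factorial * M.choose k)) := by ring
      _ ≤ (T * 2 ^ t) * (2 ^ k * E ^ k * (k : ℝ) ^ k * (M : ℝ) ^ k) := by gcongr
      _ < E ^ k * (2 ^ k * E ^ k * (k : ℝ) ^ k * (M : ℝ) ^ k) := by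
        have : (0 : ℝ) < M := by rw [hMr]; positivity
        gcongr
      _ = _ := by rw [hMr]; simp only [← mul_pow]; ring_nf
  have h6 := lt_of_pow_lt_pow_left₀ k (by positivity) h5
  have hE2 : (2.7 : ℝ) < E := by
    have := Real.exp_one_gt_d9
    rw [hE]; linarith
  clear_value E M
  have h8 : (0 : ℝ) ≤ d' := by positivity
  have h9 : 8 * (k : ℝ) ≤ n := by
    have : (4 : ℝ) ≤ E ^ 3 := by nlinarith [mul_pos hEpos hEpos]
    have : (8 : ℝ) * k ≤ 2 * E ^ 3 * (d' + 1) * k := by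
      have h10 : (8 : ℝ) ≤ 2 * E ^ 3 * (d' + 1) := by nlinarith
      nlinarith
    linarith
  have h10 : (n : ℝ) ^ 2 ≤ E * (n - k) ^ 2 := by
    have : (7 / 8 * n : ℝ) ≤ n - k := by linarith
    have h11 : (7 / 8 * n : ℝ) ^ 2 ≤ (n - k) ^ 2 := by gcongr
    have h14 : (2.7 : ℝ) * (n - k) ^ 2 ≤ E * (n - k) ^ 2 := by gcongr
    have h15 : (0 : ℝ) ≤ (n : ℝ) ^ 2 := by positivity
    have h16 : (7 / 8 * n : ℝ) ^ 2 = 49 / 64 * (n : ℝ) ^ 2 := by ring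
    linarith
  have h12 : E * (n - k) ^ 2 < n * (2 * E ^ 3 * (d' + 1) * k) := by
    calc E * ((n : ℝ) - k) ^ 2 < E * (2 * E ^ 2 * (n * (d' + 1)) * k) := by gcongr
      _ = _ := by ring
  have h13 : (n : ℝ) * (2 * E ^ 3 * (d' + 1) * k) < n * n := by gcongr
  rw [← sq] at h13
  linarith

/-- Forbes's bound: if a nonzero polynomial `P` of degree at most `Δ`
containing a monomial of support at most `ℓ` can be written as
`P = Σ_{i=1}^{T} F_i(Q_{i1}, …, Q_{it})` with each `deg Q_{ij} ≤ d`, then the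
trailing monomial of `P` (with respect to any monomial order) has support at
most `2e³d(ln T + t·ln(2t) + 1)`. -/
theorem trailing_monomial_support_bound {F : Type*} [Field F] [CharZero F]
    {N T t d Δ ℓ : ℕ}
    (P : MvPolynomial (Fin N) F) (hP : P ≠ 0) (hdegP : P.totalDegree ≤ Δ)
    (hlow : ∃ μ ∈ P.support, μ.support.card ≤ ℓ)
    (le : (Fin N →₀ ℕ) → (Fin N →₀ ℕ) → Prop) (hlin : IsLinearOrder _ le)
    (hadd : ∀ μ ν σ : Fin N →₀ ℕ, le μ ν → le (μ + σ) (ν + σ))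
    (hzero : ∀ μ : Fin N →₀ ℕ, le 0 μ)
    (Fi : Fin T → MvPolynomial (Fin t) F)
    (Q : Fin T → Fin t → MvPolynomial (Fin N) F)
    (hQ : ∀ i j, (Q i j).totalDegree ≤ d)
    (hsum : P = ∑ i : Fin T, MvPolynomial.aeval (Q i) (Fi i))
    (α : Fin N →₀ ℕ) (hα : α ∈ P.support) (htrail : ∀ β ∈ P.support, le α β) :
    (α.support.card : ℝ) ≤
      2 * Real.exp 1 ^ 3 * d *
        (Real.log T + t * Real.log (2 * t) + 1) := by
  classical
  rcases Nat.eq_zero_or_pos d with rfl | hd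
  · have hz : α = 0 := by
      have hC : ∃ a, P = C a := by
        refine ⟨∑ i, aeval (fun j => coeff 0 (Q i j)) (Fi i), ?_⟩
        rw [hsum, map_sum]
        refine Finset.sum_congr rfl fun i _ => ?_
        have : Q i = fun j => algebraMap F (MvPolynomial (Fin N) F) (coeff 0 (Q i j)) := by
          funext j
          exact totalDegree_eq_zero_iff_eq_C.1 (Nat.le_zero.1 (hQ i j))
        rw [this]
        simp only [algebraMap_eq, coeff_C, if_true]
        exact aeval_algebraMap_apply (MvPolynomial (Fin N) F) (fun j => coeff 0 (Q i j)) (Fi i)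
      obtain ⟨a, ha⟩ := hC
      rw [mem_support_iff, ha, coeff_C] at hα
      by_contra hne
      exact hα (if_neg (fun h => hne h.symm))
    simp [hz]
  obtain ⟨d', rfl⟩ : ∃ d', d = d' + 1 := ⟨d - 1, by omega⟩
  by_contra hcon
  push Not at hcon
  have hT : 1 ≤ T := by
    rcases Nat.eq_zero_or_pos T with rfl | h
    · exact absurd (by simpa using hsum) hP
    · exact h
  have hT' : (1 : ℝ) ≤ T := by exact_mod_cast hT
  set n := α.support.card with hn
  set k0 : ℝ := Real.log T + t * Real.log (2 * t) + 1 with hk0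
  have hlogT : 0 ≤ Real.log T := Real.log_nonneg hT'
  have htl : (t : ℝ) * Real.log 2 ≤ t * Real.log (2 * t) := by
    rcases Nat.eq_zero_or_pos t with rfl | h
    · simp
    · have h' : (1 : ℝ) ≤ t := by exact_mod_cast h
      gcongr
      linarith
  have hl2 : 0 ≤ (t : ℝ) * Real.log 2 := by
    have := Real.log_nonneg (by norm_num : (1 : ℝ) ≤ 2)
    positivity
  have hk01 : 1 ≤ k0 := by rw [hk0]; linarith
  set k := ⌊k0⌋₊ with hk
  have hk1 : 1 ≤ k := Nat.le_floor (by simpa using hk01)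
  have hkle : (k : ℝ) ≤ k0 := Nat.floor_le (by linarith)
  have hklt : k0 < k + 1 := Nat.lt_floor_add_one k0
  have hb : 2 * Real.exp 1 ^ 3 * (d' + 1) * k < n := by
    refine lt_of_le_of_lt ?_ hcon
    push_cast
    gcongr
  have hkn : k ≤ n := by
    have hE : (1 : ℝ) ≤ Real.exp 1 ^ 3 := one_le_pow₀ (Real.one_le_exp (by norm_num))
    have h1 : (1 : ℝ) ≤ 2 * Real.exp 1 ^ 3 * (d' + 1) := by
      have : (0 : ℝ) ≤ d' := by positivity
      nlinarith
    have h2 : (k : ℝ) ≤ 2 * Real.exp 1 ^ 3 * (d' + 1) * k := by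
      have : (0 : ℝ) ≤ k := by positivity
      nlinarith
    exact_mod_cast (h2.trans_lt hb).le
  have hTt : (T : ℝ) * 2 ^ t < Real.exp 1 ^ k := by
    have h1 : (T : ℝ) * 2 ^ t = Real.exp (Real.log T + t * Real.log 2) := by
      rw [Real.exp_add, Real.exp_log (by linarith), Real.exp_nat_mul, Real.exp_log (by norm_num)]
    rw [h1, ← Real.exp_nat_mul, mul_one, Real.exp_lt_exp]
    linarith
  refine numeric n d' k t T hk1 hkn hb hTt ?_
  -- restrict to the variables in the support of the trailing monomial
  let f : α.support → Fin N := Subtype.val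
  have hf : f.Injective := Subtype.val_injective
  let emb : (α.support →₀ ℕ) → (Fin N →₀ ℕ) := Finsupp.mapDomain f
  have hemb : emb.Injective := Finsupp.mapDomain_injective hf
  let α' : α.support →₀ ℕ := α.comapDomain f hf.injOn
  have hα' : emb α' = α := by
    refine Finsupp.mapDomain_comapDomain f hf α ?_
    intro i hi
    exact ⟨⟨i, hi⟩, rfl⟩
  have hmain := main_count (killCompl hf P) (fun a b => le (emb a) (emb b))
    { refl := fun a => hlin.refl _
      trans := fun a b c => hlin.trans _ _ _
      antisymm := fun a b h1 h2 => hemb (hlin.antisymm _ _ h1 h2)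
      total := fun a b => hlin.total _ _ }
    (by
      intro a b c h
      simp only [emb, Finsupp.mapDomain_add]
      exact hadd _ _ _ h)
    d' Fi (fun i j => killCompl hf (Q i j))
    (fun i j => tdeg_killCompl hf _ _ (hQ i j))
    (by
      rw [hsum, map_sum]
      refine Finset.sum_congr rfl fun i _ => ?_
      exact (comp_aeval_apply (Q i) (killCompl hf) (Fi i)))
    α' (by
      rw [coeff_killCompl]
      change coeff (emb α') P ≠ 0
      rw [hα']
      exact mem_support_iff.1 hα)
    (by
      intro β hβ
      rw [coeff_killCompl] at hβ
      change le (emb α') (emb β)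
      rw [hα']
      exact htrail _ (mem_support_iff.2 hβ))
    (fun i => (Finsupp.mem_support_iff.1 i.2 : α i.1 ≠ 0)) k (n * d')
  simpa only [Fintype.card_coe, Fintype.card_fin] using hmain
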